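/- arXiv:0912.5263 — 5 statements merged into one kernel-verified Lean document; each statement's English description precedes it below -/
import Mathlib

section
/- Let L be a factorial language over a finite alphabet A such that every word of L can be extended on both sides inside L (for every v in L there exist letters a, b with av in L and vb in L). Then for every n ≥ 0 one has s(n+1) − s(n) = b(n); equivalently, p(n+2) − 2p(n+1) + p(n) equals the sum of the multiplicities i(v) over all bispecial words v of L of length n. -/
/-!
Deleting the first letter, the last letter, or both, maps words of `L` of length `n + 1`,
`n + 1`, `n + 2` onto words of `L` of length `n`, because `L` is factorial. The fibres over `v`
have `mL L v`, `mR L v`, `mB L v` elements (`comp_eq_sum_ext`), so the second difference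
`p(n+2) - p(n+1) - p(n+1) + p(n)` is the sum of `mult L v` over *all* words `v` of `L` of
length `n`. Words which are not bispecial contribute `0` (`mult_eq_zero`): if `v` has a
single left extension `a`, then, every word `vb` of `L` being left extendable and only by `a`,
the two-sided extensions of `v` correspond to its right extensions, so `mB = mR` and `mL = 1`;
the other case is symmetric.
-/

/-- The number of left extensions of `v` inside `L`. -/
noncomputable def mL {A : Type*} (L : Set (List A)) (v : List A) : ℕ := {a : A | a :: v ∈ L}.ncard

/-- The number of right extensions of `v` inside `L`. -/
noncomputable def mR {A : Type*} (L : Set (List A)) (v : List A) : ℕ := {b : A | v ++ [b] ∈ L}.ncard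

/-- The number of two-sided extensions of `v` inside `L`. -/
noncomputable def mB {A : Type*} (L : Set (List A)) (v : List A) : ℕ :=
  {p : A × A | p.1 :: (v ++ [p.2]) ∈ L}.ncard

/-- A word of `L` is bispecial if it has at least two left and two right extensions. -/
def Bispecial {A : Type*} (L : Set (List A)) (v : List A) : Prop :=
  v ∈ L ∧ 2 ≤ mL L v ∧ 2 ≤ mR L v

/-- The multiplicity `i(v) = m_b(v) - m_l(v) - m_r(v) + 1` of a word. -/
noncomputable def mult {A : Type*} (L : Set (List A)) (v : List A) : ℤ :=
  (mB L v : ℤ) - (mL L v : ℤ) - (mR L v : ℤ) + 1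

/-- `b(n)`: the sum of the multiplicities of the bispecial words of length `n`. -/
noncomputable def bfun {A : Type*} (L : Set (List A)) (n : ℕ) : ℤ :=
  ∑ᶠ v ∈ {v : List A | Bispecial L v ∧ v.length = n}, mult L v

/-- The complexity `p(n)`: the number of words of length `n` in `L`. -/
noncomputable def comp {A : Type*} (L : Set (List A)) (n : ℕ) : ℕ :=
  {v : List A | v ∈ L ∧ v.length = n}.ncard

/-- If `g x v` has length `m` whenever `v` has length `n`, and each word of `L` of length `m` is
uniquely `g x v` for a word `v` of `L` of length `n` and an extension datum `x`,
then `p(m)` is the sum over `v` of the number of extensions of `v`. -/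
theorem comp_eq_sum_ext {A X : Type*} [Finite X] (L : Set (List A)) (F : Finset (List A))
    (n m : ℕ) (hF : ∀ v, v ∈ F ↔ v ∈ L ∧ v.length = n) (g : X → List A → List A)
    (hinj : ∀ x v y w, g x v = g y w → x = y ∧ v = w)
    (hlen : ∀ x v, v.length = n → (g x v).length = m)
    (hsurj : ∀ w ∈ L, w.length = m → ∃ x, ∃ v ∈ L, v.length = n ∧ g x v = w) :
    comp L m = ∑ v ∈ F, {x : X | g x v ∈ L}.ncard := by
  classical
  have := Fintype.ofFinite X
  have hT : {w : List A | w ∈ L ∧ w.length = m} =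
      (fun p : (_ : List A) × X => g p.2 p.1) ''
        (F.sigma fun v => {x : X | g x v ∈ L}.toFinset : Finset ((_ : List A) × X)) := by
    ext w
    simp only [Set.mem_ofPred_eq, Set.mem_image, Finset.coe_sigma, Set.mem_sigma_iff,
      Finset.mem_coe, Set.mem_toFinset, hF]
    constructor
    · rintro ⟨hw, hm⟩
      obtain ⟨x, v, hv, hn, rfl⟩ := hsurj w hw hm
      exact ⟨⟨v, x⟩, ⟨⟨hv, hn⟩, hw⟩, rfl⟩
    · rintro ⟨⟨v, x⟩, ⟨⟨-, hn⟩, hw⟩, rfl⟩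
      exact ⟨hw, hlen x v hn⟩
  have hg : Function.Injective (fun p : (_ : List A) × X => g p.2 p.1) := by
    rintro ⟨v, x⟩ ⟨w, y⟩ h
    obtain ⟨rfl, rfl⟩ := hinj x v y w h
    rfl
  rw [comp, hT, Set.ncard_image_of_injective _ hg, Set.ncard_coe_finset, Finset.card_sigma]
  exact Finset.sum_congr rfl fun v _ => (Set.ncard_eq_toFinset_card' _).symm

theorem mB_eq_mR {A : Type*} (L : Set (List A))
    (hfac : ∀ v w : List A, v ∈ L → w <:+: v → w ∈ L)
    (hext : ∀ v ∈ L, (∃ a : A, a :: v ∈ L) ∧ (∃ b : A, v ++ [b] ∈ L))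
    (v : List A) (h : mL L v = 1) : mB L v = mR L v := by
  obtain ⟨a, ha⟩ := Set.ncard_eq_one.mp h
  have key : ∀ c b, c :: (v ++ [b]) ∈ L → c = a := fun c b hc => by
    have : c ∈ {a : A | a :: v ∈ L} := hfac _ _ hc ⟨[], [b], by simp⟩
    rwa [ha] at this
  have himg : {b : A | v ++ [b] ∈ L} =
      Prod.snd '' {p : A × A | p.1 :: (v ++ [p.2]) ∈ L} := by
    ext b
    constructor
    · intro hb
      obtain ⟨c, hc⟩ := (hext _ hb).1
      exact ⟨(c, b), hc, rfl⟩
    · rintro ⟨⟨c, b⟩, hc, rfl⟩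
      exact hfac _ _ hc ⟨[c], [], by simp⟩
  rw [mR, himg, Set.ncard_image_of_injOn, mB]
  rintro ⟨c, b⟩ hc ⟨c', b'⟩ hc' (rfl : b = b')
  rw [key c b hc, key c' b hc']

theorem mB_eq_mL {A : Type*} (L : Set (List A))
    (hfac : ∀ v w : List A, v ∈ L → w <:+: v → w ∈ L)
    (hext : ∀ v ∈ L, (∃ a : A, a :: v ∈ L) ∧ (∃ b : A, v ++ [b] ∈ L))
    (v : List A) (h : mR L v = 1) : mB L v = mL L v := by
  obtain ⟨b, hb⟩ := Set.ncard_eq_one.mp h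
  have key : ∀ a c, a :: (v ++ [c]) ∈ L → c = b := fun a c hc => by
    have : c ∈ {b : A | v ++ [b] ∈ L} := hfac _ _ hc ⟨[a], [], by simp⟩
    rwa [hb] at this
  have himg : {a : A | a :: v ∈ L} =
      Prod.fst '' {p : A × A | p.1 :: (v ++ [p.2]) ∈ L} := by
    ext a
    constructor
    · intro ha
      obtain ⟨c, hc⟩ := (hext _ ha).2
      exact ⟨(a, c), hc, rfl⟩
    · rintro ⟨⟨a, c⟩, hc, rfl⟩
      exact hfac _ _ hc ⟨[], [c], by simp⟩
  rw [mL, himg, Set.ncard_image_of_injOn, mB]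
  rintro ⟨a, c⟩ hc ⟨a', c'⟩ hc' (rfl : a = a')
  rw [key a c hc, key a c' hc']

theorem mult_eq_zero {A : Type*} [Finite A] (L : Set (List A))
    (hfac : ∀ v w : List A, v ∈ L → w <:+: v → w ∈ L)
    (hext : ∀ v ∈ L, (∃ a : A, a :: v ∈ L) ∧ (∃ b : A, v ++ [b] ∈ L))
    (v : List A) (hv : v ∈ L) (hb : ¬ Bispecial L v) : mult L v = 0 := by
  have hl : 0 < mL L v := (Set.ncard_pos (Set.toFinite _)).mpr (hext v hv).1
  have hr : 0 < mR L v := (Set.ncard_pos (Set.toFinite _)).mpr (hext v hv).2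
  have h : mL L v = 1 ∨ mR L v = 1 := by
    by_contra! h
    exact hb ⟨hv, by omega, by omega⟩
  unfold mult
  rcases h with h | h
  · rw [mB_eq_mR L hfac hext v h, h]
    ring
  · rw [mB_eq_mL L hfac hext v h, h]
    ring

/-- For a factorial language over a finite alphabet in which every word extends on both
sides, `s(n+1) - s(n) = b(n)`, i.e. `p(n+2) - 2 p(n+1) + p(n) = b(n)`. -/
theorem second_difference_eq_bispecial_sum {A : Type*} [Fintype A] (L : Set (List A))
    (hfac : ∀ v w : List A, v ∈ L → w <:+: v → w ∈ L)
    (hext : ∀ v ∈ L, (∃ a : A, a :: v ∈ L) ∧ (∃ b : A, v ++ [b] ∈ L)) (n : ℕ) :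
    ((comp L (n+2) : ℤ) - comp L (n+1)) - ((comp L (n+1) : ℤ) - comp L n) = bfun L n := by
  classical
  have hfin : {v : List A | v ∈ L ∧ v.length = n}.Finite :=
    (List.finite_length_eq A n).subset fun v hv => hv.2
  set F := hfin.toFinset with hFdef
  have hF : ∀ v, v ∈ F ↔ v ∈ L ∧ v.length = n := fun v => by simp [hFdef]
  have h0 : comp L n = F.card := Set.ncard_eq_toFinset_card _ hfin
  have hl : comp L (n + 1) = ∑ v ∈ F, mL L v := by
    refine comp_eq_sum_ext L F n (n + 1) hF (fun a v => a :: v) (by simp) (by simp) ?_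
    intro w hw hm
    obtain ⟨a, v, rfl⟩ := List.exists_cons_of_length_eq_add_one hm
    exact ⟨a, v, hfac _ _ hw ⟨[a], [], by simp⟩, by simpa using hm, rfl⟩
  have hr : comp L (n + 1) = ∑ v ∈ F, mR L v := by
    refine comp_eq_sum_ext L F n (n + 1) hF (fun b v => v ++ [b]) ?_ (by simp) ?_
    · intro x v y w h
      simpa [and_comm] using List.append_inj' h rfl
    intro w hw hm
    obtain rfl | ⟨v, b, rfl⟩ := List.eq_nil_or_concat w
    · simp at hm
    exact ⟨b, v, hfac _ _ hw ⟨[], [b], by simp⟩, by simpa using hm, by simp⟩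
  have hb : comp L (n + 2) = ∑ v ∈ F, mB L v := by
    refine comp_eq_sum_ext L F n (n + 2) hF
      (fun (p : A × A) v => p.1 :: (v ++ [p.2])) ?_ (by simp) ?_
    · rintro ⟨a, b⟩ v ⟨c, d⟩ w h
      obtain ⟨rfl, h⟩ := List.cons_eq_cons.mp h
      obtain ⟨rfl, h⟩ := List.append_inj' h rfl
      simpa using h
    intro w hw hm
    obtain ⟨a, u, rfl⟩ := List.exists_cons_of_length_eq_add_one hm
    obtain rfl | ⟨v, b, rfl⟩ := List.eq_nil_or_concat u
    · simp at hm
    exact ⟨(a, b), v, hfac _ _ hw ⟨[a], [b], by simp⟩, by simpa using hm, by simp⟩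
  have hsum : bfun L n = ∑ v ∈ F, mult L v := by
    have hset : {v : List A | Bispecial L v ∧ v.length = n} =
        ((F.filter fun v => Bispecial L v : Finset (List A)) : Set (List A)) := by
      ext v
      simp only [Set.mem_ofPred_eq, Finset.coe_filter, hF]
      exact ⟨fun h => ⟨⟨h.1.1, h.2⟩, h.1⟩, fun h => ⟨h.2, h.1.2⟩⟩
    rw [bfun, hset, finsum_mem_coe_finset]
    refine Finset.sum_filter_of_ne fun v hv hne => ?_
    by_contra hnb
    exact hne (mult_eq_zero L hfac hext v ((hF v).mp hv).1 hnb)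
  have hexp : ∑ v ∈ F, mult L v =
      (comp L (n + 2) : ℤ) - ∑ v ∈ F, (mL L v : ℤ) - ∑ v ∈ F, (mR L v : ℤ) + comp L n := by
    rw [hb, h0]
    simp [mult, Finset.sum_add_distrib, Finset.sum_sub_distrib]
  rw [hsum, hexp, ← Nat.cast_sum, ← Nat.cast_sum, ← hl, ← hr]
  ring
end

section
/- The bispecial words of the language L_sq are exactly the words 2ⁿ for n ≥ 0 (including the empty word) and the words 2ⁿ 1 2ⁿ for n ≥ 0. -/
/-!
The word `(1·2ⁿ)^ω` has a `1` exactly at the multiples of `n + 1`, so a word belongs to `Lsq` iff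
its letters are read off this pattern from some offset `j` (`mem_Lsq_iff`). As only the letters
`1` and `2` occur, a word is left (right) special iff both `1` and `2` extend it.

Let `v` be bispecial, not a power of `2`, and let `p` be the position of its first `1`. Membership
of `1 v` forces the period `p + 1`, so the `1`s of `v` sit at the positions `i` with
`p + 1 ∣ i + 1`. If `v` had a second `1`, any period of `2 v` would divide `p + 1`, and the letter
in front of `v` would have to be `1`, not `2`; hence `v = 2^p 1 2^b` with `b ≤ p`. Membership of
`v 1` forces the period `b + 1`, which for `b < p` would create a `1` before position `p`. So
`b = p`. Conversely, the extensions of `2ⁿ` and `2ⁿ 1 2ⁿ` are found in `(1·2ⁿ)^ω` and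
`(1·2ⁿ⁺¹)^ω`.
-/

/-- `powWord w k` is the word `w` concatenated `k` times. -/
def powWord {A : Type*} (w : List A) (k : ℕ) : List A := (List.replicate k w).flatten

/-- `v` is a factor of the one-sided infinite periodic word `w^ω`. -/
def IsFactorPer {A : Type*} (w v : List A) : Prop := ∃ k, v <:+: powWord w k

/-- `L_sq`: the factors of the periodic words `(1·2ⁿ)^ω`, `n ∈ ℕ`, over the alphabet `{1,2}`. -/
def Lsq : Set (List ℕ) := {v | ∃ n : ℕ, IsFactorPer (1 :: List.replicate n 2) v}

/-- The letter at position `i` of `(1·2ⁿ)^ω`. -/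
def sqLetter (n i : ℕ) : ℕ := if n + 1 ∣ i then 1 else 2

lemma sqLetter_eq_one {n i : ℕ} : sqLetter n i = 1 ↔ n + 1 ∣ i := by
  unfold sqLetter; split_ifs with h <;> simp [h]

lemma sqLetter_eq_two {n i : ℕ} : sqLetter n i = 2 ↔ ¬ n + 1 ∣ i := by
  unfold sqLetter; split_ifs with h <;> simp [h]

lemma powWord_eq (n k : ℕ) :
    powWord (1 :: List.replicate n 2) k = (List.range ((n + 1) * k)).map (sqLetter n) := by
  induction k with
  | zero => simp [powWord]
  | succ k ih =>
    have hsucc : powWord (1 :: List.replicate n 2) (k + 1)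
        = (1 :: List.replicate n 2) ++ powWord (1 :: List.replicate n 2) k := by
      simp [powWord, List.replicate_succ]
    rw [hsucc, ih, show (n + 1) * (k + 1) = (n + 1) + (n + 1) * k by ring, List.range_add,
      List.map_append]
    congr 1
    · apply List.ext_getElem
      · simp
      · intro i h1 h2
        have hi : i < n + 1 := by simpa using h2
        rcases i with _ | i
        · simp [sqLetter]
        · have : ¬ n + 1 ∣ i + 1 := fun h => by
            have := Nat.le_of_dvd (by omega) h
            omega
          simp [sqLetter, this]
    · simp [sqLetter]

/-- Words of `Lsq` are those read from the pattern of some `(1·2ⁿ)^ω` at some offset `j`. -/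
lemma mem_Lsq_iff (v : List ℕ) :
    v ∈ Lsq ↔ ∃ n j, ∀ i (h : i < v.length), v[i] = sqLetter n (j + i) := by
  constructor
  · rintro ⟨n, k, s, t, h⟩
    rw [powWord_eq] at h
    refine ⟨n, s.length, fun i hi => ?_⟩
    have h2 := congrArg (fun l => l[s.length + i]?) h
    have hlen := congrArg List.length h
    simp only [List.length_append, List.length_map, List.length_range] at hlen
    simp only [List.append_assoc] at h2
    rw [List.getElem?_append_right (by omega), List.getElem?_append_left (by omega),
      List.getElem?_eq_getElem (by omega), List.getElem?_eq_getElem (by simp; omega)] at h2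
    simpa using h2
  · rintro ⟨n, j, h⟩
    refine ⟨n, j + v.length, ?_⟩
    rw [powWord_eq]
    have hle : j + v.length ≤ (n + 1) * (j + v.length) := Nat.le_mul_of_pos_left _ (by omega)
    have hv : v = (((List.range ((n + 1) * (j + v.length))).map (sqLetter n)).drop j).take
        v.length := by
      apply List.ext_getElem
      · simp; omega
      · intro i h1 h2
        simp [h i h1]
    have hinf := (List.take_prefix v.length (((List.range ((n + 1) * (j + v.length))).map
      (sqLetter n)).drop j)).isInfix.trans (List.drop_suffix _ _).isInfix
    rwa [← hv] at hinf

lemma letter_of_mem {v : List ℕ} (hv : v ∈ Lsq) {a : ℕ} (ha : a ∈ v) : a = 1 ∨ a = 2 := by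
  obtain ⟨n, j, h⟩ := (mem_Lsq_iff v).1 hv
  obtain ⟨i, hi, rfl⟩ := List.getElem_of_mem ha
  rw [h i hi]
  unfold sqLetter
  split_ifs <;> simp

lemma two_le_ncard_iff {s : Set ℕ} (hs : ∀ a ∈ s, a = 1 ∨ a = 2) :
    2 ≤ s.ncard ↔ 1 ∈ s ∧ 2 ∈ s := by
  have hsub : s ⊆ {1, 2} := fun a ha => by simpa using hs a ha
  have hfin : s.Finite := (Set.toFinite _).subset hsub
  constructor
  · intro h
    have heq : s = {1, 2} := Set.eq_of_subset_of_ncard_le hsub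
      (by rw [Set.ncard_pair (by norm_num)]; exact h) (Set.toFinite _)
    simp [heq]
  · rintro ⟨h1, h2⟩
    rw [← Set.ncard_pair (show (1 : ℕ) ≠ 2 by norm_num)]
    exact Set.ncard_le_ncard (by rintro a (rfl | rfl) <;> assumption) hfin

lemma two_le_mL_iff (v : List ℕ) : 2 ≤ mL Lsq v ↔ 1 :: v ∈ Lsq ∧ 2 :: v ∈ Lsq :=
  two_le_ncard_iff fun _ ha => letter_of_mem ha List.mem_cons_self

lemma two_le_mR_iff (v : List ℕ) : 2 ≤ mR Lsq v ↔ v ++ [1] ∈ Lsq ∧ v ++ [2] ∈ Lsq :=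
  two_le_ncard_iff fun _ ha => letter_of_mem ha (by simp)

lemma mem_of_cons_mem {a : ℕ} {v : List ℕ} (h : a :: v ∈ Lsq) : v ∈ Lsq := by
  obtain ⟨n, k, hk⟩ := h
  exact ⟨n, k, (List.suffix_cons a v).isInfix.trans hk⟩

/-- If `1 v`, `2 v` and `v 1` lie in `Lsq` (`v 2` is not needed) and `v` contains a `1`, then `v`
is symmetric around its only `1`. -/
lemma eq_of_extensions {v : List ℕ} (h1 : 1 :: v ∈ Lsq) (h2 : 2 :: v ∈ Lsq)
    (h3 : v ++ [1] ∈ Lsq) (hone : ∃ p, ∃ h : p < v.length, v[p] = 1) :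
    ∃ n : ℕ, v = List.replicate n 2 ++ 1 :: List.replicate n 2 := by
  classical
  obtain ⟨p, ⟨hp, hvp⟩, hmin⟩ :
      ∃ p, (∃ h : p < v.length, v[p] = 1) ∧ ∀ i < p, ¬ ∃ h : i < v.length, v[i] = 1 :=
    ⟨Nat.find hone, Nat.find_spec hone, fun i hi => Nat.find_min hone hi⟩
  obtain ⟨n, j, hn⟩ := (mem_Lsq_iff _).1 h1
  obtain ⟨m, k, hm⟩ := (mem_Lsq_iff _).1 h2
  obtain ⟨r, l, hr⟩ := (mem_Lsq_iff _).1 h3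
  have hj : n + 1 ∣ j := by
    have := hn 0 (by simp)
    exact sqLetter_eq_one.1 (by simpa using this.symm)
  have hk : ¬ m + 1 ∣ k := by
    have := hm 0 (by simp)
    exact sqLetter_eq_two.1 (by simpa using this.symm)
  have hn' : ∀ i (h : i < v.length), v[i] = sqLetter n (i + 1) := by
    intro i h
    have := hn (i + 1) (by simpa using h)
    rw [List.getElem_cons_succ] at this
    rw [this]
    simp only [sqLetter, Nat.dvd_add_right hj]
  have hm' : ∀ i (h : i < v.length), v[i] = sqLetter m (k + (i + 1)) := by
    intro i h
    have := hm (i + 1) (by simpa using h)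
    rwa [List.getElem_cons_succ] at this
  have hr' : ∀ i (h : i < v.length), v[i] = sqLetter r (l + i) := by
    intro i h
    have := hr i (by simp; omega)
    rwa [List.getElem_append_left h] at this
  have hrL : r + 1 ∣ l + v.length := by
    have := hr v.length (by simp)
    exact sqLetter_eq_one.1 (by simpa using this.symm)
  -- The period of `1 v` is the distance between the prepended `1` and the first `1` of `v`.
  have hnp : n = p := by
    have hd := sqLetter_eq_one.1 ((hn' p hp).symm.trans hvp)
    have hle := Nat.le_of_dvd (by omega) hd
    by_contra hne
    exact hmin n (by omega) ⟨by omega, by rw [hn' n (by omega), sqLetter_eq_one]⟩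
  subst hnp
  have hmn := sqLetter_eq_one.1 ((hm' n hp).symm.trans hvp)
  have hrn := sqLetter_eq_one.1 ((hr' n hp).symm.trans hvp)
  -- A second `1` would propagate the common period back to the letter `2` in front of `v`.
  have hL : v.length ≤ 2 * n + 1 := by
    by_contra hlt
    have hv2 : v[2 * n + 1]'(by omega) = 1 := by
      rw [hn' _ (by omega), sqLetter_eq_one]
      exact ⟨2, by ring⟩
    have hd := sqLetter_eq_one.1 ((hm' _ (by omega)).symm.trans hv2)
    have hd' : m + 1 ∣ n + 1 := by
      have := Nat.dvd_sub hd hmn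
      rwa [show k + (2 * n + 1 + 1) - (k + (n + 1)) = n + 1 by omega] at this
    exact hk ((Nat.dvd_add_left hd').1 hmn)
  have huniq : ∀ i (h : i < v.length), v[i] = 1 → i = n := by
    intro i h hi
    rw [hn' i h, sqLetter_eq_one] at hi
    obtain ⟨c, hc⟩ := hi
    have hc1 : c = 1 := by
      rcases c with _ | _ | c
      · omega
      · rfl
      · have : (n + 1) * 2 ≤ (n + 1) * (c + 1 + 1) := Nat.mul_le_mul_left _ (by omega)
        omega
    subst hc1
    omega
  -- The period of `v 1` is the distance between the `1` of `v` and the appended `1`.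
  have hrlen : r + 1 = v.length - n := by
    have hd : r + 1 ∣ v.length - n := by
      have := Nat.dvd_sub hrL hrn
      rwa [show l + v.length - (l + n) = v.length - n by omega] at this
    have hle := Nat.le_of_dvd (by omega) hd
    by_contra hne
    have hlt : n + (r + 1) < v.length := by omega
    have := huniq _ hlt (by
      rw [hr' _ hlt, sqLetter_eq_one, ← add_assoc]
      exact Dvd.dvd.add hrn dvd_rfl)
    omega
  have hlen : v.length = 2 * n + 1 := by
    by_contra hne
    have hlt : n - (r + 1) < v.length := by omega
    have := huniq _ hlt (by
      rw [hr' _ hlt, sqLetter_eq_one, show l + (n - (r + 1)) = l + n - (r + 1) by omega]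
      exact Nat.dvd_sub hrn dvd_rfl)
    omega
  refine ⟨n, List.ext_getElem (by simp; omega) fun i hi hi' => ?_⟩
  by_cases hin : i = n
  · subst hin
    simp [hvp]
  · have hne : v[i] ≠ 1 := fun h => hin (huniq i hi h)
    have hv2 : v[i] = 2 :=
      (letter_of_mem (mem_of_cons_mem h1) (List.getElem_mem hi)).resolve_left hne
    rw [hv2, List.getElem_append]
    split_ifs with h
    · simp
    · obtain ⟨d, hd⟩ : ∃ d, i = n + 1 + d :=
        ⟨i - (n + 1), by simp at h; omega⟩
      subst hd
      simp [show n + 1 + d - n = d + 1 by omega]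

/-- The factors of `1 2ⁿ 1 2ⁿ 1`, for varying `n`, include every extension needed in the
converse. -/
lemma mem_of_factor {v : List ℕ} (n : ℕ)
    (h : v <:+: 1 :: (List.replicate n 2 ++ 1 :: (List.replicate n 2 ++ [1]))) : v ∈ Lsq := by
  refine ⟨n, 3, h.trans (List.IsPrefix.isInfix ⟨List.replicate n 2, ?_⟩)⟩
  simp [powWord, List.replicate_succ]

/-- The bispecial words of `L_sq` are exactly the `2ⁿ` and the `2ⁿ 1 2ⁿ`, `n ≥ 0`. -/
theorem bispecial_Lsq (v : List ℕ) :
    Bispecial Lsq v ↔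
      (∃ n : ℕ, v = List.replicate n 2) ∨
      (∃ n : ℕ, v = List.replicate n 2 ++ 1 :: List.replicate n 2) := by
  unfold Bispecial
  rw [two_le_mL_iff, two_le_mR_iff]
  constructor
  · rintro ⟨hv, ⟨h1, h2⟩, h3, -⟩
    by_cases hone : ∃ p, ∃ h : p < v.length, v[p] = 1
    · exact Or.inr (eq_of_extensions h1 h2 h3 hone)
    · refine Or.inl ⟨v.length, List.eq_replicate_of_mem fun a ha => ?_⟩
      refine (letter_of_mem hv ha).resolve_left ?_
      rintro rfl
      obtain ⟨i, hi, h⟩ := List.getElem_of_mem ha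
      exact hone ⟨i, hi, h⟩
  · rintro (⟨n, rfl⟩ | ⟨n, rfl⟩)
    · have h1 : 1 :: List.replicate n 2 ∈ Lsq :=
        mem_of_factor n ⟨[], 1 :: (List.replicate n 2 ++ [1]), by simp⟩
      have h2 : 2 :: List.replicate n 2 ∈ Lsq :=
        mem_of_factor (n + 1) ⟨[1], 1 :: (List.replicate (n + 1) 2 ++ [1]),
          by simp [List.replicate_succ]⟩
      refine ⟨mem_of_cons_mem h1, ⟨h1, h2⟩, ?_, ?_⟩
      · exact mem_of_factor n ⟨[1], List.replicate n 2 ++ [1], by simp⟩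
      · rwa [← List.replicate_succ', List.replicate_succ]
    · have h1 : 1 :: (List.replicate n 2 ++ 1 :: List.replicate n 2) ∈ Lsq :=
        mem_of_factor n ⟨[], [1], by simp⟩
      refine ⟨mem_of_cons_mem h1, ⟨h1, ?_⟩, ?_, ?_⟩
      · exact mem_of_factor (n + 1) ⟨[1], [2, 1], by
          rw [show List.replicate (n + 1) 2 ++ [1] = List.replicate n 2 ++ [2, 1] by
            simp [List.replicate_succ']]
          simp [List.replicate_succ]⟩
      · exact mem_of_factor n ⟨[1], [], by simp⟩
      · exact mem_of_factor (n + 1) ⟨[1, 2], [1], by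
          rw [show List.replicate (n + 1) 2 ++ [1] = List.replicate n 2 ++ [2, 1] by
            simp [List.replicate_succ']]
          simp [List.replicate_succ]⟩
end

section
/- The language L_hex is invariant under the substitution α_hex defined by α_hex(1) = 1, α_hex(2) = 23, α_hex(3) = 3: for every word w in L_hex, the word α_hex(w) is again in L_hex. -/
/-- `L_hex`: the factors of the periodic words `(2·3ⁿ)^ω` and `(2·3ⁿ·2·3ⁿ⁺¹)^ω` for `n ∈ ℕ`,
together with the factors of `1^ω`, over the alphabet `{1,2,3}`. -/
def Lhex : Set (List ℕ) :=
  {v | (∃ n : ℕ, IsFactorPer (2 :: List.replicate n 3) v) ∨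
       (∃ n : ℕ, IsFactorPer (2 :: List.replicate n 3 ++ 2 :: List.replicate (n+1) 3) v) ∨
       IsFactorPer [1] v}

/-- The substitution `α_hex : 1 ↦ 1, 2 ↦ 23, 3 ↦ 3`, extended to words by concatenation. -/
def alphaHex (a : ℕ) : List ℕ := if a = 2 then [2, 3] else [a]

/-- A substitution maps factors of `w^ω` to factors of the periodic word on the image of `w`. -/
theorem IsFactorPer.flatMap {A B : Type*} (f : A → List B) {w v : List A}
    (h : IsFactorPer w v) : IsFactorPer (w.flatMap f) (v.flatMap f) := by
  obtain ⟨k, s, t, hst⟩ := h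
  have hpow : ∀ k, (powWord w k).flatMap f = powWord (w.flatMap f) k := by
    intro k
    induction k with
    | zero => simp [powWord]
    | succ k ih =>
      simp only [powWord, List.replicate_succ, List.flatten_cons, List.flatMap_append] at ih ⊢
      rw [ih]
  exact ⟨k, s.flatMap f, t.flatMap f, by
    rw [← hpow, ← hst, List.flatMap_append, List.flatMap_append]⟩

theorem replicate_three_flatMap_alphaHex (n : ℕ) :
    (List.replicate n 3).flatMap alphaHex = List.replicate n 3 := by
  induction n with
  | zero => rfl
  | succ n ih => rw [List.replicate_succ, List.flatMap_cons, ih]; simp [alphaHex]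

/-- The substitution raises the exponent: `2·3ⁿ ↦ 2·3ⁿ⁺¹`. -/
theorem period_flatMap_alphaHex (n : ℕ) :
    (2 :: List.replicate n 3).flatMap alphaHex = 2 :: List.replicate (n + 1) 3 := by
  rw [List.flatMap_cons, replicate_three_flatMap_alphaHex]
  simp [alphaHex, List.replicate_succ]

/-- The language `L_hex` is invariant under the substitution `α_hex`. -/
theorem Lhex_invariant_alphaHex :
    ∀ w ∈ Lhex, w.flatMap alphaHex ∈ Lhex := by
  -- Each family of periods is mapped into itself, with `n` replaced by `n + 1`; `1` is fixed.
  rintro w (⟨n, h⟩ | ⟨n, h⟩ | h)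
  · refine Or.inl ⟨n + 1, ?_⟩
    simpa only [period_flatMap_alphaHex] using h.flatMap alphaHex
  · refine Or.inr (Or.inl ⟨n + 1, ?_⟩)
    simpa only [List.flatMap_append, period_flatMap_alphaHex] using h.flatMap alphaHex
  · exact Or.inr (Or.inr (h.flatMap alphaHex))
end

section
/- The bispecial words of the language L_hex are exactly the following words: 3ⁿ for n ≥ 0 (including the empty word), 3ⁿ 2 3ⁿ for n ≥ 0, 3ⁿ 2 3ⁿ⁺¹ for n ≥ 0, 3ⁿ⁺¹ 2 3ⁿ for n ≥ 0, 3ⁿ 2 3ⁿ⁺¹ 2 3ⁿ for n ≥ 0, 3ⁿ 2 3ⁿ 2 3ⁿ for n ≥ 1, and the word 22. -/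
/-- Two consecutive run lengths allowed in `L_hex`: they differ by at most one. -/
def Near (x y : ℕ) : Prop := x ≤ y + 1 ∧ y ≤ x + 1

/-- One period `2 3ˣ 2 3ʸ` of a word whose runs of `3` have alternating lengths `x` and `y`. -/
def period (x y : ℕ) : List ℕ :=
  (2 :: List.replicate x 3) ++ (2 :: List.replicate y 3)

/-- The word `2 3ˣ 2 3ʸ 2 3ˣ ⋯` with `k` runs, built one run at a time, the roles of `x` and `y`
being exchanged at each step. -/
def altWord : ℕ → ℕ → ℕ → List ℕ
  | _, _, 0 => []
  | x, y, k + 1 => 2 :: (List.replicate x 3 ++ altWord y x k)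

/-! ### Powers of words and the description of the language -/

lemma powWord_succ {A : Type*} (w : List A) (k : ℕ) : powWord w (k + 1) = w ++ powWord w k := by
  simp [powWord, List.replicate_succ]

lemma powWord_add {A : Type*} (w : List A) (j k : ℕ) :
    powWord w (j + k) = powWord w j ++ powWord w k := by
  rw [powWord, List.replicate_add, List.flatten_append]; rfl

/-- Powers of conjugate words agree up to a shift. -/
lemma powWord_conj {A : Type*} (s t : List A) (k : ℕ) :
    powWord (s ++ t) k ++ s = s ++ powWord (t ++ s) k := by
  induction k with
  | zero => simp [powWord]
  | succ k ih => rw [powWord_succ, powWord_succ, List.append_assoc, ih]; simp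

lemma powWord_conj_infix {A : Type*} (s t : List A) (k : ℕ) :
    powWord (t ++ s) k <:+: powWord (s ++ t) (k + 1) := by
  rw [powWord_add]
  refine ⟨s, t, ?_⟩
  rw [← powWord_conj]
  simp [powWord]

lemma powWord_reverse {A : Type*} (w : List A) (k : ℕ) :
    (powWord w k).reverse = powWord w.reverse k := by
  simp [powWord, List.reverse_flatten]

lemma powWord_period (x y k : ℕ) : powWord (period x y) k = altWord x y (2 * k) := by
  induction k with
  | zero => simp [powWord, altWord]
  | succ k ih => rw [powWord_succ, ih]; simp [period, altWord, Nat.mul_add]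

lemma powWord_append_self (w : List ℕ) (k : ℕ) : powWord (w ++ w) k = powWord w (2 * k) := by
  induction k with
  | zero => simp [powWord]
  | succ k ih =>
    rw [powWord_succ, ih, Nat.mul_add, Nat.mul_one, powWord_succ, powWord_succ, List.append_assoc]

/-- The two families of periodic words over `{2,3}` merge into one: `(2·3ⁿ)^ω` is the case
`x = y = n` of alternating run lengths, and exchanging `x` and `y` only shifts the word. -/
lemma mem_Lhex_iff (v : List ℕ) :
    v ∈ Lhex ↔ (∃ x y, Near x y ∧ IsFactorPer (period x y) v) ∨ IsFactorPer [1] v := by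
  constructor
  · rintro (⟨n, k, h⟩ | ⟨n, h⟩ | h)
    · refine Or.inl ⟨n, n, ⟨by omega, by omega⟩, k, h.trans ?_⟩
      rw [period, powWord_append_self, two_mul, powWord_add]
      exact (List.prefix_append _ _).isInfix
    · exact Or.inl ⟨n, n + 1, ⟨by omega, by omega⟩, h⟩
    · exact Or.inr h
  · rintro (⟨x, y, ⟨hx, hy⟩, k, h⟩ | h)
    · obtain rfl | rfl | rfl : x = y ∨ y = x + 1 ∨ x = y + 1 := by omega
      · refine Or.inl ⟨x, 2 * k, ?_⟩
        rwa [← powWord_append_self]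
      · exact Or.inr (Or.inl ⟨x, k, h⟩)
      · exact Or.inr (Or.inl ⟨y, k + 1, h.trans (powWord_conj_infix _ _ _)⟩)
    · exact Or.inr (Or.inr h)

lemma mem_of_infix {u v : List ℕ} (h : u <:+: v) (hv : v ∈ Lhex) : u ∈ Lhex := by
  rw [mem_Lhex_iff] at *
  rcases hv with ⟨x, y, hn, k, hk⟩ | ⟨k, hk⟩
  · exact Or.inl ⟨x, y, hn, k, h.trans hk⟩
  · exact Or.inr ⟨k, h.trans hk⟩

lemma mem_reverse {v : List ℕ} (hv : v ∈ Lhex) : v.reverse ∈ Lhex := by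
  rw [mem_Lhex_iff] at *
  rcases hv with ⟨x, y, hn, k, hk⟩ | ⟨k, hk⟩
  · refine Or.inl ⟨y, x, ⟨hn.2, hn.1⟩, k + 1, (List.reverse_infix.2 hk).trans ?_⟩
    -- the reversed period is a conjugate of `2 3ʸ 2 3ˣ`
    have e1 : (period x y).reverse = (List.replicate y 3 ++ 2 :: List.replicate x 3) ++ [2] := by
      simp [period]
    have e2 : period y x = [2] ++ (List.replicate y 3 ++ 2 :: List.replicate x 3) := by
      simp [period]
    rw [powWord_reverse, e1, e2]
    exact powWord_conj_infix _ _ _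
  · exact Or.inr ⟨k, by simpa [powWord_reverse] using List.reverse_infix.2 hk⟩

lemma mem_reverse_iff {v : List ℕ} : v.reverse ∈ Lhex ↔ v ∈ Lhex :=
  ⟨fun h => by simpa using mem_reverse h, mem_reverse⟩

lemma letters {v : List ℕ} (hv : v ∈ Lhex) : (∀ a ∈ v, a = 2 ∨ a = 3) ∨ ∀ a ∈ v, a = 1 := by
  rw [mem_Lhex_iff] at hv
  rcases hv with ⟨x, y, -, k, hk⟩ | ⟨k, hk⟩
  · left
    intro a ha
    have := hk.subset ha
    simp only [powWord, period, List.mem_flatten, List.mem_replicate] at this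
    obtain ⟨l, ⟨-, rfl⟩, hl⟩ := this
    simp at hl
    tauto
  · right
    intro a ha
    have := hk.subset ha
    simp only [powWord, List.mem_flatten, List.mem_replicate] at this
    obtain ⟨l, ⟨-, rfl⟩, hl⟩ := this
    simpa using hl

/-! ### Constraints on run lengths -/

/-- What follows a letter `2` in an alternating word begins with a complete run, possibly the
last one. -/
lemma altWord_after_two {p q : List ℕ} {x y k : ℕ} (h : p ++ 2 :: q = altWord x y k) :
    ∃ x' y' k', (x' = x ∧ y' = y ∨ x' = y ∧ y' = x) ∧
      q = List.replicate x' 3 ++ altWord y' x' k' := by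
  induction k generalizing p x y with
  | zero => simp [altWord] at h
  | succ k ih =>
    rcases p with _ | ⟨c, p⟩
    · simp only [altWord, List.nil_append, List.cons.injEq, true_and] at h
      exact ⟨x, y, k, Or.inl ⟨rfl, rfl⟩, h⟩
    · simp only [altWord, List.cons_append, List.cons.injEq] at h
      rcases List.append_eq_append_iff.1 h.2 with ⟨r, h1, h2⟩ | ⟨r, h1, h2⟩
      · -- the letter `2` cannot lie inside the run `3ˣ`
        rcases r with _ | ⟨d, r⟩
        · obtain ⟨x', y', k', h3, h4⟩ := ih (p := []) (x := y) (y := x) (by simpa using h2)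
          exact ⟨x', y', k', by tauto, h4⟩
        · exfalso
          have : d ∈ List.replicate x 3 := by rw [h1]; simp
          have := List.eq_of_mem_replicate this
          simp only [List.cons_append, List.cons.injEq] at h2
          omega
      · obtain ⟨x', y', k', h3, h4⟩ := ih (p := r) (x := y) (y := x) h2.symm
        exact ⟨x', y', k', by tauto, h4⟩

lemma run_le {c x y k : ℕ} {r : List ℕ}
    (h : List.replicate c 3 ++ r = List.replicate x 3 ++ altWord y x k) : c ≤ x := by
  induction x generalizing c k y with
  | zero =>
    rcases c with _ | c
    · rfl
    · rcases k with _ | k <;> simp [altWord, List.replicate_succ] at h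
  | succ x ih =>
    rcases c with _ | c
    · omega
    · by_contra hc
      have hx : c = x + 1 + (c - x - 1) := by omega
      rw [hx, show x + 1 + (c - x - 1) + 1 = (x + 1) + (c - x - 1 + 1) by omega,
        List.replicate_add, List.append_assoc, List.append_cancel_left_eq] at h
      rcases k with _ | k <;> simp [altWord, List.replicate_succ] at h

/-- A run of `3` that is followed by a `2` is complete. -/
lemma run_eq {b x y k : ℕ} {r : List ℕ}
    (h : List.replicate b 3 ++ 2 :: r = List.replicate x 3 ++ altWord y x k) :
    b = x ∧ ∃ k', r = List.replicate y 3 ++ altWord x y k' := by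
  have hb : b ≤ x := run_le h
  obtain ⟨d, rfl⟩ := Nat.exists_eq_add_of_le hb
  rw [List.replicate_add, List.append_assoc, List.append_cancel_left_eq] at h
  rcases d with _ | d
  · refine ⟨rfl, ?_⟩
    rcases k with _ | k
    · simp [altWord] at h
    · simp only [altWord, List.replicate_zero, List.nil_append, List.cons.injEq, true_and] at h
      exact ⟨k, h⟩
  · simp [List.replicate_succ] at h

/-- A word of `L_hex` beginning with `2` continues as an alternating word of near run lengths, up
to the suffix `t` that completes it. -/
lemma exists_of_two_cons {q : List ℕ} (h : 2 :: q ∈ Lhex) :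
    ∃ x y k t, Near x y ∧ q ++ t = List.replicate x 3 ++ altWord y x k := by
  rcases (mem_Lhex_iff _).1 h with ⟨x, y, hn, k, s, t, hk⟩ | ⟨k, hk⟩
  · rw [powWord_period, List.append_assoc] at hk
    obtain ⟨x', y', k', h1, h2⟩ := altWord_after_two hk
    refine ⟨x', y', k', t, ?_, h2⟩
    unfold Near at *
    omega
  · exfalso
    have := hk.subset (List.mem_cons_self)
    simp [powWord] at this

lemma le_succ_of_mem {b c : ℕ}
    (h : 2 :: (List.replicate b 3 ++ 2 :: List.replicate c 3) ∈ Lhex) : c ≤ b + 1 := by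
  obtain ⟨x, y, k, t, hn, h⟩ := exists_of_two_cons h
  rw [List.append_assoc, List.cons_append] at h
  obtain ⟨rfl, k', h⟩ := run_eq h
  exact (run_le h).trans hn.2

lemma le_of_mem {a b c : ℕ}
    (h : 2 :: (List.replicate a 3 ++ 2 :: (List.replicate b 3 ++ 2 :: List.replicate c 3)) ∈ Lhex) :
    c ≤ a := by
  obtain ⟨x, y, k, t, hn, h⟩ := exists_of_two_cons h
  rw [List.append_assoc, List.cons_append] at h
  obtain ⟨rfl, k', h⟩ := run_eq h
  rw [List.append_assoc, List.cons_append] at h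
  obtain ⟨rfl, k', h⟩ := run_eq h
  exact run_le h

/-- The mirror image of `le_succ_of_mem`. -/
lemma le_succ_of_mem' {a b : ℕ}
    (h : List.replicate a 3 ++ 2 :: (List.replicate b 3 ++ [2]) ∈ Lhex) : a ≤ b + 1 :=
  le_succ_of_mem (by simpa using mem_reverse h)

/-- The mirror image of `le_of_mem`. -/
lemma le_of_mem' {a b c : ℕ}
    (h : List.replicate a 3 ++ 2 :: (List.replicate b 3 ++ 2 :: (List.replicate c 3 ++ [2])) ∈
      Lhex) : a ≤ c :=
  le_of_mem (b := b) (by simpa using mem_reverse h)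

/-! ### Words belonging to the language -/

lemma mem_run_two_run {x y a c : ℕ} (hn : Near x y) (ha : a ≤ y) (hc : c ≤ y) :
    List.replicate a 3 ++ 2 :: (List.replicate x 3 ++ 2 :: List.replicate c 3) ∈ Lhex := by
  obtain ⟨d, rfl⟩ := Nat.exists_eq_add_of_le ha
  obtain ⟨e, he⟩ := Nat.exists_eq_add_of_le hc
  refine (mem_Lhex_iff _).2 (Or.inl ⟨x, a + d, hn, 2, ?_⟩)
  refine ⟨2 :: (List.replicate x 3 ++ 2 :: List.replicate d 3), List.replicate e 3, ?_⟩
  have h1 : List.replicate (a + d) (3 : ℕ) = List.replicate d 3 ++ List.replicate a 3 := by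
    rw [Nat.add_comm, List.replicate_add]
  have h2 : List.replicate (a + d) (3 : ℕ) = List.replicate c 3 ++ List.replicate e 3 := by
    rw [he, List.replicate_add]
  have h3 : powWord (period x (a + d)) 2 = (2 :: List.replicate x 3) ++
      (2 :: List.replicate (a + d) 3) ++ ((2 :: List.replicate x 3) ++
      (2 :: List.replicate (a + d) 3)) := by
    simp [powWord, period, List.replicate_succ]
  rw [h3]
  -- the two occurrences of the run `3ʸ` are cut differently
  conv_rhs => enter [1, 2, 2]; rw [h1]
  rw [h2]
  simp only [List.append_assoc, List.cons_append]

lemma mem_two_run_two_run {x y : ℕ} (hn : Near x y) :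
    2 :: (List.replicate x 3 ++ 2 :: (List.replicate y 3 ++ 2 :: List.replicate x 3)) ∈ Lhex := by
  refine (mem_Lhex_iff _).2 (Or.inl ⟨x, y, hn, 2, [], 2 :: List.replicate y 3, ?_⟩)
  simp [powWord, period, List.replicate_succ]

/-! ### Bispecial words -/

lemma finite_left (v : List ℕ) : {a : ℕ | a :: v ∈ Lhex}.Finite := by
  refine (Set.finite_le_nat 3).subset fun a ha => ?_
  rcases letters ha with h | h <;> have := h a List.mem_cons_self <;> simp <;> omega

lemma mR_eq (v : List ℕ) : mR Lhex v = mL Lhex v.reverse := by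
  unfold mR mL
  congr 1
  ext a
  simp only [Set.mem_ofPred_eq]
  rw [← mem_reverse_iff]
  simp

lemma two_le_mL {v : List ℕ} (h2 : 2 :: v ∈ Lhex) (h3 : 3 :: v ∈ Lhex) : 2 ≤ mL Lhex v :=
  (Set.one_lt_ncard (finite_left v)).2 ⟨2, h2, 3, h3, by decide⟩

/-- A letter `1` occurs only next to letters `1`, so a nonempty left special word is extended by
`2` and by `3`. -/
lemma left_extensions {v : List ℕ} (hv : v ≠ []) (h : 2 ≤ mL Lhex v) :
    2 :: v ∈ Lhex ∧ 3 :: v ∈ Lhex := by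
  obtain ⟨a, ha, b, hb, hab⟩ := (Set.one_lt_ncard (finite_left v)).1 h
  simp only [Set.mem_ofPred_eq] at ha hb
  obtain ⟨c, w, rfl⟩ := List.exists_cons_of_ne_nil hv
  rcases letters ha with h1 | h1 <;> rcases letters hb with h2 | h2 <;>
    have a1 := h1 a (by simp) <;> have a2 := h1 c (by simp) <;>
    have b1 := h2 b (by simp) <;> have b2 := h2 c (by simp)
  · rcases a1 with rfl | rfl <;> rcases b1 with rfl | rfl
    · exact absurd rfl hab
    · exact ⟨ha, hb⟩
    · exact ⟨hb, ha⟩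
    · exact absurd rfl hab
  all_goals omega

lemma Bispecial.extensions {v : List ℕ} (hv : v ≠ []) (h : Bispecial Lhex v) :
    (2 :: v ∈ Lhex ∧ 3 :: v ∈ Lhex) ∧ (v ++ [2] ∈ Lhex ∧ v ++ [3] ∈ Lhex) := by
  obtain ⟨-, hl, hr⟩ := h
  refine ⟨left_extensions hv hl, ?_⟩
  rw [mR_eq] at hr
  have := left_extensions (by simpa using hv) hr
  rw [← mem_reverse_iff, ← mem_reverse_iff (v := 3 :: _)] at this
  simpa using this

/-- A word over `{2,3}` is a run of `3`, or splits at its first letter `2`. -/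
lemma split_run {v : List ℕ} (h : ∀ a ∈ v, a = 2 ∨ a = 3) :
    (∃ a, v = List.replicate a 3) ∨
      ∃ a w, v = List.replicate a 3 ++ 2 :: w ∧ ∀ a ∈ w, a = 2 ∨ a = 3 := by
  induction v with
  | nil => exact Or.inl ⟨0, rfl⟩
  | cons c v ih =>
    rcases h c (by simp) with rfl | rfl
    · exact Or.inr ⟨0, v, rfl, fun a ha => h a (by simp [ha])⟩
    · rcases ih fun a ha => h a (by simp [ha]) with ⟨a, rfl⟩ | ⟨a, w, rfl, hw⟩
      · exact Or.inl ⟨a + 1, rfl⟩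
      · exact Or.inr ⟨a + 1, w, rfl, hw⟩

/-- The words of the theorem, `22` being the case `n = 0` of `3ⁿ23ⁿ23ⁿ`. -/
def Listed (v : List ℕ) : Prop :=
  (∃ n, v = List.replicate n 3) ∨
  (∃ n, v = List.replicate n 3 ++ 2 :: List.replicate n 3) ∨
  (∃ n, v = List.replicate n 3 ++ 2 :: List.replicate (n + 1) 3) ∨
  (∃ n, v = List.replicate (n + 1) 3 ++ 2 :: List.replicate n 3) ∨
  (∃ n, v = List.replicate n 3 ++ 2 :: (List.replicate (n + 1) 3 ++ 2 :: List.replicate n 3)) ∨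
  (∃ n, v = List.replicate n 3 ++ 2 :: (List.replicate n 3 ++ 2 :: List.replicate n 3))

lemma Listed.reverse {v : List ℕ} (h : Listed v) : Listed v.reverse := by
  rcases h with ⟨n, rfl⟩ | ⟨n, rfl⟩ | ⟨n, rfl⟩ | ⟨n, rfl⟩ | ⟨n, rfl⟩ | ⟨n, rfl⟩
  · exact Or.inl ⟨n, by simp⟩
  · exact Or.inr (Or.inl ⟨n, by simp⟩)
  · exact Or.inr (Or.inr (Or.inr (Or.inl ⟨n, by simp⟩)))
  · exact Or.inr (Or.inr (Or.inl ⟨n, by simp⟩))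
  · exact Or.inr (Or.inr (Or.inr (Or.inr (Or.inl ⟨n, by simp⟩))))
  · exact Or.inr (Or.inr (Or.inr (Or.inr (Or.inr ⟨n, by simp⟩))))

lemma Listed.left_mem {v : List ℕ} (h : Listed v) : 2 :: v ∈ Lhex ∧ 3 :: v ∈ Lhex := by
  have near_self (n : ℕ) : Near n n := ⟨by omega, by omega⟩
  have near_succ (n : ℕ) : Near n (n + 1) := ⟨by omega, by omega⟩
  have near_succ' (n : ℕ) : Near (n + 1) n := ⟨by omega, by omega⟩
  -- the one-`2` word `3ᵃ 2 3ᶜ` is a prefix of `3ᵃ 2 3ˣ 2` with `x = max a c`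
  have one_two (a c : ℕ) : List.replicate a 3 ++ 2 :: List.replicate c 3 ∈ Lhex := by
    have h := mem_run_two_run (near_self (max a c)) (le_max_left a c) (Nat.zero_le _)
    refine mem_of_infix (List.IsPrefix.isInfix
      ⟨List.replicate (max a c - c) 3 ++ [2], ?_⟩) h
    have : List.replicate (max a c) (3 : ℕ) =
        List.replicate c 3 ++ List.replicate (max a c - c) 3 := by
      rw [← List.replicate_add]; congr 1; omega
    rw [this]; simp only [List.append_assoc, List.cons_append, List.replicate_zero]
  have pre {x y : ℕ} (hn : Near x y) :
      2 :: (List.replicate x 3 ++ 2 :: List.replicate y 3) ∈ Lhex :=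
    mem_of_infix (List.IsPrefix.isInfix ⟨2 :: List.replicate x 3, by simp⟩)
      (mem_two_run_two_run hn)
  rcases h with ⟨n, rfl⟩ | ⟨n, rfl⟩ | ⟨n, rfl⟩ | ⟨n, rfl⟩ | ⟨n, rfl⟩ | ⟨n, rfl⟩
  · exact ⟨by simpa using one_two 0 n,
      mem_of_infix (List.IsPrefix.isInfix ⟨[2], by simp [List.replicate_succ]⟩) (one_two (n + 1) 0)⟩
  · exact ⟨pre (near_self n), one_two (n + 1) n⟩
  · exact ⟨pre (near_succ n), one_two (n + 1) (n + 1)⟩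
  · exact ⟨pre (near_succ' n), one_two (n + 2) n⟩
  · exact ⟨mem_two_run_two_run (near_succ n),
      mem_run_two_run (a := n + 1) (near_self (n + 1)) le_rfl (Nat.le_succ n)⟩
  · exact ⟨mem_two_run_two_run (near_self n),
      mem_run_two_run (a := n + 1) (near_succ n) le_rfl (Nat.le_succ n)⟩

lemma Listed.bispecial {v : List ℕ} (h : Listed v) : Bispecial Lhex v := by
  refine ⟨mem_of_infix (List.suffix_cons 2 v).isInfix h.left_mem.1,
    two_le_mL h.left_mem.1 h.left_mem.2, ?_⟩
  rw [mR_eq]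
  exact two_le_mL h.reverse.left_mem.1 h.reverse.left_mem.2

lemma Bispecial.listed {v : List ℕ} (h : Bispecial Lhex v) : Listed v := by
  by_cases hv : v = []
  · exact Or.inl ⟨0, by simpa using hv⟩
  obtain ⟨⟨l2, l3⟩, r2, r3⟩ := h.extensions hv
  have hlet : ∀ a ∈ v, a = 2 ∨ a = 3 := by
    rcases letters l2 with h | h
    · exact fun a ha => h a (by simp [ha])
    · exact absurd (h 2 (by simp)) (by decide)
  obtain ⟨a, rfl⟩ | ⟨a, w, rfl, hw⟩ := split_run hlet
  · exact Or.inl ⟨a, rfl⟩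
  obtain ⟨b, rfl⟩ | ⟨b, w, rfl, hw'⟩ := split_run hw
  · have h1 := le_succ_of_mem l2
    have h2 := le_succ_of_mem' (a := a) (b := b) (by simpa using r2)
    obtain rfl | rfl | rfl : a = b ∨ b = a + 1 ∨ a = b + 1 := by omega
    · exact Or.inr (Or.inl ⟨a, rfl⟩)
    · exact Or.inr (Or.inr (Or.inl ⟨a, rfl⟩))
    · exact Or.inr (Or.inr (Or.inr (Or.inl ⟨b, rfl⟩)))
  obtain ⟨c, rfl⟩ | ⟨c, w, rfl, -⟩ := split_run hw'
  · have h1 : c ≤ a := le_of_mem l2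
    have h2 : a ≤ c := le_of_mem' (b := b) (by simpa using r2)
    have h3 : a + 1 ≤ b + 1 := le_succ_of_mem' (mem_of_infix (List.IsPrefix.isInfix
      ⟨List.replicate c 3, by simp [List.replicate_succ]⟩) l3)
    have h4 : b ≤ a + 1 := le_succ_of_mem (mem_of_infix (List.IsPrefix.isInfix
      ⟨2 :: List.replicate c 3, by simp⟩) l2)
    obtain rfl : a = c := by omega
    obtain rfl | rfl : b = a + 1 ∨ b = a := by omega
    · exact Or.inr (Or.inr (Or.inr (Or.inr (Or.inl ⟨a, rfl⟩))))
    · exact Or.inr (Or.inr (Or.inr (Or.inr (Or.inr ⟨b, rfl⟩))))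
  · exfalso
    have h1 : c ≤ a := le_of_mem (b := b) (mem_of_infix (List.IsPrefix.isInfix
      ⟨2 :: w, by simp⟩) l2)
    have h2 : a + 1 ≤ c := le_of_mem' (b := b) (mem_of_infix (List.IsPrefix.isInfix
      ⟨w, by simp [List.replicate_succ]⟩) l3)
    omega

/-- The bispecial words of `L_hex` are exactly: `3ⁿ`, `3ⁿ23ⁿ`, `3ⁿ23ⁿ⁺¹`, `3ⁿ⁺¹23ⁿ`,
`3ⁿ23ⁿ⁺¹23ⁿ` for `n ≥ 0`, `3ⁿ23ⁿ23ⁿ` for `n ≥ 1`, and the word `22`. -/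
theorem bispecial_Lhex (v : List ℕ) :
    Bispecial Lhex v ↔
      (∃ n : ℕ, v = List.replicate n 3) ∨
      (∃ n : ℕ, v = List.replicate n 3 ++ 2 :: List.replicate n 3) ∨
      (∃ n : ℕ, v = List.replicate n 3 ++ 2 :: List.replicate (n+1) 3) ∨
      (∃ n : ℕ, v = List.replicate (n+1) 3 ++ 2 :: List.replicate n 3) ∨
      (∃ n : ℕ, v = List.replicate n 3 ++ 2 :: List.replicate (n+1) 3 ++
        2 :: List.replicate n 3) ∨
      (∃ n : ℕ, 1 ≤ n ∧ v = List.replicate n 3 ++ 2 :: List.replicate n 3 ++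
        2 :: List.replicate n 3) ∨
      v = [2, 2] := by
  have key : Bispecial Lhex v ↔ Listed v := ⟨fun h => h.listed, fun h => h.bispecial⟩
  rw [key, Listed]
  simp only [List.append_assoc, List.cons_append]
  refine or_congr_right <| or_congr_right <| or_congr_right <| or_congr_right <|
    or_congr_right ⟨?_, ?_⟩
  · rintro ⟨_ | n, rfl⟩
    · exact Or.inr rfl
    · exact Or.inl ⟨n + 1, by omega, rfl⟩
  · rintro (⟨n, -, rfl⟩ | rfl)
    · exact ⟨n, rfl⟩
    · exact ⟨0, rfl⟩
end

section
/- For the language L_hex, the bispecial multiplicity function satisfies Σ_{i=n}^{n+11} b(i) = 10 for every n ≥ 0; more precisely b(n) depends only on n mod 6 and equals 0, 2, 0, 1, 1, 1 according as n ≡ 0, 1, 2, 3, 4, 5 (mod 6). -/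
/-! ### An automaton for the language -/

/-- `Reads c d e v`: the word `v` is a prefix of the infinite word `3^c 2 3^d 2 3^e 2 3^d 2 3^e ⋯`. -/
def Reads : ℕ → ℕ → ℕ → List ℕ → Prop
  | _, _, _, [] => True
  | 0, d, e, x :: v => x = 2 ∧ Reads d e d v
  | c + 1, d, e, x :: v => x = 3 ∧ Reads c d e v

/-- `Admits v`: the word `v` is a factor of some `(2 3^d 2 3^e)^ω` with `|d - e| ≤ 1`. The condition
`c ≤ e` says that `v` starts inside a block of length `e` (or just before the `2` following it). -/
def Admits (v : List ℕ) : Prop :=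
  ∃ c d e, c ≤ e ∧ d ≤ e + 1 ∧ e ≤ d + 1 ∧ Reads c d e v

@[simp] lemma reads_nil (c d e : ℕ) : Reads c d e [] := by
  cases c <;> simp [Reads]

lemma reads_two (c d e : ℕ) (v : List ℕ) : Reads c d e (2 :: v) ↔ c = 0 ∧ Reads d e d v := by
  cases c <;> simp [Reads]

lemma reads_replicate (a c d e : ℕ) (v : List ℕ) :
    Reads c d e (List.replicate a 3 ++ v) ↔ a ≤ c ∧ Reads (c - a) d e v := by
  induction a generalizing c with
  | zero => simp
  | succ a ih =>
    cases c with
    | zero => simp [List.replicate_succ, Reads]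
    | succ c => simp [List.replicate_succ, Reads, ih]

lemma Reads.of_append {c d e : ℕ} {u v : List ℕ} (h : Reads c d e (u ++ v)) : Reads c d e u := by
  induction u generalizing c d e with
  | nil => simp
  | cons x u ih =>
    cases c with
    | zero => exact ⟨h.1, ih h.2⟩
    | succ c => exact ⟨h.1, ih h.2⟩

lemma Reads.letters {c d e : ℕ} {v : List ℕ} (h : Reads c d e v) : ∀ x ∈ v, x = 2 ∨ x = 3 := by
  induction v generalizing c d e with
  | nil => simp
  | cons x u ih =>
    cases c with
    | zero => simpa [h.1] using ih h.2
    | succ c => simpa [h.1] using ih h.2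

/-- The automaton is deterministic: words read from the same state are comparable. -/
lemma Reads.isPrefix_of_le {c d e : ℕ} {u v : List ℕ} (hu : Reads c d e u) (hv : Reads c d e v)
    (h : u.length ≤ v.length) : u <+: v := by
  induction u generalizing c d e v with
  | nil => simp
  | cons x u ih =>
    cases v with
    | nil => simp at h
    | cons y v =>
      have h' : u.length ≤ v.length := by simpa using h
      cases c with
      | zero => rw [hu.1, hv.1, List.prefix_cons_inj]; exact ih hu.2 hv.2 h'
      | succ c => rw [hu.1, hv.1, List.prefix_cons_inj]; exact ih hu.2 hv.2 h'

lemma Admits.tail {x : ℕ} {v : List ℕ} (h : Admits (x :: v)) : Admits v := by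
  obtain ⟨c, d, e, hc, hd, he, h⟩ := h
  cases c with
  | zero => exact ⟨d, e, d, le_rfl, he, hd, h.2⟩
  | succ c => exact ⟨c, d, e, by omega, hd, he, h.2⟩

lemma Admits.of_isFactor {v w : List ℕ} (h : Admits w) (hv : v <:+: w) : Admits v := by
  obtain ⟨s, t, rfl⟩ := hv
  rw [List.append_assoc] at h
  induction s with
  | nil =>
    rw [List.nil_append] at h
    obtain ⟨c, d, e, hc, hd, he, h⟩ := h
    exact ⟨c, d, e, hc, hd, he, h.of_append⟩
  | cons x s ih => exact ih h.tail

lemma Admits.letters {v : List ℕ} (h : Admits v) : ∀ x ∈ v, x = 2 ∨ x = 3 := by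
  obtain ⟨c, d, e, hc, hd, he, h⟩ := h
  exact h.letters

lemma length_powWord {A : Type*} (w : List A) (k : ℕ) : (powWord w k).length = k * w.length := by
  simp [powWord]

lemma reads_powWord_one (n k : ℕ) : Reads 0 n n (powWord (2 :: List.replicate n 3) k) := by
  induction k with
  | zero => simp [powWord]
  | succ k ih => simpa [powWord_succ, reads_two, reads_replicate] using ih

lemma reads_powWord_two (m l k : ℕ) :
    Reads 0 m l (powWord (2 :: List.replicate m 3 ++ 2 :: List.replicate l 3) k) := by
  induction k with
  | zero => simp [powWord]
  | succ k ih => simpa [powWord_succ, reads_two, reads_replicate] using ih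

lemma isFactorPer_one (v : List ℕ) : IsFactorPer [1] v ↔ v = List.replicate v.length 1 := by
  have h : ∀ k, powWord [1] k = List.replicate k 1 := by
    intro k
    induction k with
    | zero => rfl
    | succ k ih => rw [powWord_succ, ih]; rfl
  constructor
  · rintro ⟨k, hk⟩
    rw [h] at hk
    exact List.eq_replicate_iff.2 ⟨rfl, fun b hb => List.eq_of_mem_replicate (hk.subset hb)⟩
  · intro hv
    exact ⟨v.length, by rw [h, ← hv]⟩

/-- A block `3^e` may be entered at any point: `3^c w` with `c ≤ e` is a suffix of `u 3^e w`. -/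
lemma suffix_block {c e : ℕ} (hc : c ≤ e) (u w : List ℕ) :
    List.replicate c 3 ++ w <:+ u ++ List.replicate e 3 ++ w := by
  obtain ⟨k, rfl⟩ := Nat.exists_eq_add_of_le' hc
  exact ⟨u ++ List.replicate k 3, by rw [List.replicate_add]; simp only [List.append_assoc]⟩

lemma mem_Lhex (v : List ℕ) : v ∈ Lhex ↔ v = List.replicate v.length 1 ∨ Admits v := by
  constructor
  · rintro (⟨n, k, h⟩ | ⟨n, k, h⟩ | h)
    · exact Or.inr (Admits.of_isFactor
        ⟨0, n, n, by omega, by omega, by omega, reads_powWord_one n k⟩ h)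
    · exact Or.inr (Admits.of_isFactor
        ⟨0, n, n + 1, by omega, by omega, by omega, reads_powWord_two n (n + 1) k⟩ h)
    · exact Or.inl ((isFactorPer_one v).1 h)
  · rintro (h | ⟨c, d, e, hc, hd, he, h⟩)
    · exact Or.inr (Or.inr ((isFactorPer_one v).2 h))
    · -- In each case `v` is compared with a long enough suffix of a power of the period.
      obtain rfl | rfl | rfl : e = d ∨ e = d + 1 ∨ d = e + 1 := by omega
      · refine Or.inl ⟨e, v.length + 1, ?_⟩
        have h2 := h.isPrefix_of_le (v := List.replicate c 3 ++ powWord (2 :: List.replicate e 3) v.length)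
          (by rw [reads_replicate]; simpa using reads_powWord_one e _)
          (by simp [length_powWord]; nlinarith)
        refine h2.isInfix.trans (List.IsSuffix.isInfix ?_)
        rw [powWord_succ]
        exact suffix_block hc [2] _
      · refine Or.inr (Or.inl ⟨d, v.length + 1, ?_⟩)
        have h2 := h.isPrefix_of_le (v := List.replicate c 3 ++
            powWord (2 :: List.replicate d 3 ++ 2 :: List.replicate (d + 1) 3) v.length)
          (by rw [reads_replicate]; simpa using reads_powWord_two d (d + 1) _)
          (by simp only [List.length_append, List.length_cons, length_powWord]; nlinarith)
        refine h2.isInfix.trans (List.IsSuffix.isInfix ?_)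
        rw [powWord_succ]
        generalize powWord _ _ = w
        have h3 := suffix_block hc (2 :: (List.replicate d 3 ++ [2])) w
        simp only [List.cons_append, List.append_assoc, List.nil_append] at h3 ⊢
        exact h3
      · refine Or.inr (Or.inl ⟨e, v.length + 1, ?_⟩)
        have h2 := h.isPrefix_of_le (v := List.replicate c 3 ++ 2 :: (List.replicate (e + 1) 3 ++
            powWord (2 :: List.replicate e 3 ++ 2 :: List.replicate (e + 1) 3) v.length))
          (by
            rw [reads_replicate, reads_two, reads_replicate]
            simpa using reads_powWord_two e (e + 1) _)
          (by simp only [List.length_append, List.length_cons, length_powWord]; nlinarith)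
        refine h2.isInfix.trans (List.IsSuffix.isInfix ?_)
        rw [powWord_succ]
        generalize powWord _ _ = w
        simpa using suffix_block hc [2] (2 :: (List.replicate (e + 1) 3 ++ w))

/-! ### Words given by their block lengths -/

/-- `blk a [b₁, …, bᵣ]` is the word `3^a 2 3^b₁ 2 ⋯ 2 3^bᵣ`. -/
def blk : ℕ → List ℕ → List ℕ
  | a, [] => List.replicate a 3
  | a, b :: l => List.replicate a 3 ++ 2 :: blk b l

lemma two_cons_blk (a : ℕ) (l : List ℕ) : 2 :: blk a l = blk 0 (a :: l) := by
  simp [blk]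

lemma three_cons_blk (a : ℕ) (l : List ℕ) : 3 :: blk a l = blk (a + 1) l := by
  cases l <;> simp [blk, List.replicate_succ]

lemma blk_append_two (a : ℕ) (l : List ℕ) : blk a l ++ [2] = blk a (l ++ [0]) := by
  induction l generalizing a with
  | nil => simp [blk]
  | cons b l ih => simp [blk, ih]

lemma blk_append_three₀ (a : ℕ) : blk a [] ++ [3] = blk (a + 1) [] := by
  simp [blk, List.replicate_succ']

lemma blk_append_three₁ (a b : ℕ) : blk a [b] ++ [3] = blk a [b + 1] := by
  simp [blk, List.replicate_succ']

lemma blk_append_three₂ (a k b : ℕ) : blk a [k, b] ++ [3] = blk a [k, b + 1] := by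
  simp [blk, List.replicate_succ']

lemma one_notMem_blk (a : ℕ) (l : List ℕ) : 1 ∉ blk a l := by
  induction l generalizing a with
  | nil => simp [blk, List.mem_replicate]
  | cons b l ih => simp [blk, List.mem_replicate, ih]

lemma reads_blk_nil (a c d e : ℕ) : Reads c d e (blk a []) ↔ a ≤ c := by
  have := reads_replicate a c d e []
  simpa [blk] using this

lemma reads_blk_cons (a c d e b : ℕ) (l : List ℕ) :
    Reads c d e (blk a (b :: l)) ↔ a = c ∧ Reads d e d (blk b l) := by
  rw [blk, reads_replicate, reads_two, ← and_assoc]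
  exact and_congr_left fun _ => by omega

lemma admits_blk₀ (a : ℕ) : Admits (blk a []) :=
  ⟨a, a, a, by omega, by omega, by omega, by simp [reads_blk_nil]⟩

lemma admits_blk₁ (a b : ℕ) : Admits (blk a [b]) :=
  ⟨a, a + b, a + b, by omega, by omega, by omega, by simp [reads_blk_nil, reads_blk_cons]⟩

lemma admits_blk₂ (a k b : ℕ) : Admits (blk a [k, b]) ↔ a ≤ k + 1 ∧ b ≤ k + 1 := by
  simp only [Admits, reads_blk_nil, reads_blk_cons]
  constructor
  · rintro ⟨c, d, e, h⟩
    omega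
  · intro h
    by_cases h' : a ≤ k ∧ b ≤ k
    · exact ⟨a, k, k, by omega⟩
    · exact ⟨a, k, k + 1, by omega⟩

lemma admits_blk₃ (a k l b : ℕ) :
    Admits (blk a [k, l, b]) ↔ a ≤ l ∧ b ≤ k ∧ k ≤ l + 1 ∧ l ≤ k + 1 := by
  simp only [Admits, reads_blk_nil, reads_blk_cons]
  constructor
  · rintro ⟨c, d, e, h⟩
    omega
  · intro h
    exact ⟨a, k, l, by omega⟩

lemma admits_blk₄ (a k l m b : ℕ) :
    Admits (blk a [k, l, m, b]) ↔ a ≤ l ∧ m = k ∧ b ≤ l ∧ k ≤ l + 1 ∧ l ≤ k + 1 := by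
  simp only [Admits, reads_blk_nil, reads_blk_cons]
  constructor
  · rintro ⟨c, d, e, h⟩
    omega
  · intro h
    exact ⟨a, k, l, by omega⟩

lemma Reads.exists_blk {c d e : ℕ} {v : List ℕ} (h : Reads c d e v) :
    (∃ a, v = blk a []) ∨ ∃ u, v = List.replicate c 3 ++ 2 :: u ∧ Reads d e d u := by
  induction v generalizing c with
  | nil => exact Or.inl ⟨0, rfl⟩
  | cons x v ih =>
    cases c with
    | zero => exact Or.inr ⟨v, by simp [h.1], h.2⟩
    | succ c =>
      obtain ⟨a, rfl⟩ | ⟨u, rfl, hu⟩ := ih h.2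
      · exact Or.inl ⟨a + 1, by rw [h.1, three_cons_blk]⟩
      · exact Or.inr ⟨u, by simp [h.1, List.replicate_succ], hu⟩

/-- A word of `L_hex` over `{2, 3}` that can be preceded by both `2` and `3` contains at most two
letters `2`. -/
lemma exists_blk_of_left_special {v : List ℕ} (h2 : Admits (2 :: v)) (h3 : Admits (3 :: v)) :
    (∃ a, v = blk a []) ∨ (∃ a b, v = blk a [b]) ∨ ∃ a k b, v = blk a [k, b] := by
  obtain ⟨c, d, e, hc, hd, he, h⟩ := h2.tail
  obtain ⟨a, rfl⟩ | ⟨u, rfl, hu⟩ := h.exists_blk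
  · exact Or.inl ⟨a, rfl⟩
  obtain ⟨a, rfl⟩ | ⟨u, rfl, hu'⟩ := hu.exists_blk
  · exact Or.inr (Or.inl ⟨c, a, by simp [blk]⟩)
  obtain ⟨a, rfl⟩ | ⟨u, rfl, -⟩ := hu'.exists_blk
  · exact Or.inr (Or.inr ⟨c, d, a, by simp [blk]⟩)
  exfalso
  obtain ⟨c₂, d₂, e₂, hc₂, -, -, h₂⟩ := h2
  obtain ⟨c₃, d₃, e₃, hc₃, -, -, h₃⟩ := h3
  have e3 : ∀ w : List ℕ, 3 :: (List.replicate c 3 ++ w) = List.replicate (c + 1) 3 ++ w := by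
    simp [List.replicate_succ]
  rw [e3] at h₃
  simp only [reads_two, reads_replicate] at h₂ h₃
  -- The prefix `2` forces `c = e`, the prefix `3` forces `c + 1 ≤ e`.
  omega

/-! ### Multiplicities -/

open Classical in
/-- If `S` is contained in the finite set `T`, its cardinality can be counted over `T`. -/
lemma ncard_eq_sum_ite {α : Type*} {S : Set α} (T : Finset α) (h : ∀ x ∈ S, x ∈ T) :
    S.ncard = ∑ x ∈ T, if x ∈ S then 1 else 0 := by
  have hS : S = ((T.filter (· ∈ S) : Finset α) : Set α) := by
    ext x
    simpa using h x
  rw [← Finset.card_filter]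
  conv_lhs => rw [hS]
  exact Set.ncard_coe_finset _

/-- A word other than `1^n` lies in `L_hex` exactly if `Admits` holds. -/
lemma mem_Lhex_of_mem {x : ℕ} {v : List ℕ} (hx : x ∈ v) (h1 : x ≠ 1) :
    v ∈ Lhex ↔ Admits v := by
  rw [mem_Lhex, or_iff_right]
  intro h
  rw [h] at hx
  exact h1 (List.eq_of_mem_replicate hx)

open Classical in
/-- A nonempty word without the letter `1` can be extended inside `L_hex` only by `2` and `3`. -/
lemma mL_eq {v : List ℕ} (hv : v ≠ []) (h1 : 1 ∉ v) :
    mL Lhex v = ∑ a ∈ {2, 3}, if Admits (a :: v) then 1 else 0 := by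
  obtain ⟨x, hx⟩ := List.exists_mem_of_ne_nil v hv
  have hx1 : x ≠ 1 := fun h => h1 (h ▸ hx)
  have key : ∀ a, a :: v ∈ Lhex ↔ Admits (a :: v) := fun a =>
    mem_Lhex_of_mem (List.mem_cons_of_mem _ hx) hx1
  rw [mL, ncard_eq_sum_ite {2, 3}]
  · simp [key]
  · intro a ha
    simpa using ((key a).1 ha).letters a (by simp)

open Classical in
lemma mR_eq_s7 {v : List ℕ} (hv : v ≠ []) (h1 : 1 ∉ v) :
    mR Lhex v = ∑ b ∈ {2, 3}, if Admits (v ++ [b]) then 1 else 0 := by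
  obtain ⟨x, hx⟩ := List.exists_mem_of_ne_nil v hv
  have hx1 : x ≠ 1 := fun h => h1 (h ▸ hx)
  have key : ∀ b, v ++ [b] ∈ Lhex ↔ Admits (v ++ [b]) := fun a =>
    mem_Lhex_of_mem (List.mem_append_left _ hx) hx1
  rw [mR, ncard_eq_sum_ite {2, 3}]
  · simp [key]
  · intro a ha
    simpa using ((key a).1 ha).letters a (by simp)

open Classical in
lemma mB_eq {v : List ℕ} (hv : v ≠ []) (h1 : 1 ∉ v) :
    mB Lhex v = ∑ a ∈ {2, 3}, ∑ b ∈ {2, 3}, if Admits (a :: v ++ [b]) then 1 else 0 := by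
  obtain ⟨x, hx⟩ := List.exists_mem_of_ne_nil v hv
  have hx1 : x ≠ 1 := fun h => h1 (h ▸ hx)
  have key : ∀ a b, a :: (v ++ [b]) ∈ Lhex ↔ Admits (a :: v ++ [b]) := fun a b =>
    mem_Lhex_of_mem (List.mem_cons_of_mem _ (List.mem_append_left _ hx)) hx1
  rw [mB, ncard_eq_sum_ite ({2, 3} ×ˢ {2, 3}), Finset.sum_product]
  · simp [key]
  · rintro ⟨a, b⟩ hab
    have h := ((key a b).1 hab).letters
    simpa using ⟨h a (by simp), h b (by simp)⟩

lemma mult_nil : mult Lhex [] = 0 := by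
  classical
  have one : ∀ a, [a] ∈ Lhex ↔ a = 1 ∨ a = 2 ∨ a = 3 := by
    intro a
    rw [mem_Lhex]
    refine or_congr (by simp) ⟨fun h => h.letters a (by simp), ?_⟩
    rintro (rfl | rfl)
    · exact admits_blk₁ 0 0
    · exact admits_blk₀ 1
  have two : ∀ a b, [a, b] ∈ Lhex ↔
      (a = 1 ∧ b = 1) ∨ ((a = 2 ∨ a = 3) ∧ (b = 2 ∨ b = 3)) := by
    intro a b
    rw [mem_Lhex]
    refine or_congr (by simp) ⟨fun h => ⟨h.letters a (by simp), h.letters b (by simp)⟩, ?_⟩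
    rintro ⟨rfl | rfl, rfl | rfl⟩
    · exact (admits_blk₂ 0 0 0).2 (by omega)
    · exact admits_blk₁ 0 1
    · exact admits_blk₁ 1 0
    · exact admits_blk₀ 2
  have hL : {a | [a] ∈ Lhex} = (({1, 2, 3} : Finset ℕ) : Set ℕ) := by
    ext a
    simp [one]
  have hB : {p : ℕ × ℕ | [p.1, p.2] ∈ Lhex} =
      (({(1, 1), (2, 2), (2, 3), (3, 2), (3, 3)} : Finset (ℕ × ℕ)) : Set (ℕ × ℕ)) := by
    ext ⟨a, b⟩
    simp only [Set.mem_ofPred_eq, two, Finset.coe_insert, Finset.coe_singleton,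
      Set.mem_insert_iff, Set.mem_singleton_iff, Prod.mk.injEq]
    tauto
  simp only [mult, mB, mL, mR, List.nil_append, hL, hB, Set.ncard_coe_finset]
  rfl

lemma blk_ne_nil_of_ne {a : ℕ} {l : List ℕ} (h : a ≠ 0 ∨ l ≠ []) : blk a l ≠ [] := by
  cases l <;> simp_all [blk]

lemma ext_blk₀ {a : ℕ} (ha : a ≠ 0) :
    mL Lhex (blk a []) = 2 ∧ mR Lhex (blk a []) = 2 ∧ mB Lhex (blk a []) = 4 := by
  have h0 : blk a [] ≠ [] := blk_ne_nil_of_ne (Or.inl ha)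
  have h1 := one_notMem_blk a []
  rw [mL_eq h0 h1, mR_eq_s7 h0 h1, mB_eq h0 h1]
  simp only [Finset.sum_pair (show (2 : ℕ) ≠ 3 by norm_num)]
  simp [two_cons_blk, three_cons_blk, blk_append_two, blk_append_three₀,
    blk_append_three₁, admits_blk₀, admits_blk₁, admits_blk₂]

lemma ext_blk₁ (a b : ℕ) :
    mL Lhex (blk a [b]) = (if b ≤ a + 1 then 1 else 0) + 1 ∧
    mR Lhex (blk a [b]) = (if a ≤ b + 1 then 1 else 0) + 1 ∧
    mB Lhex (blk a [b]) = (if a ≤ b + 1 ∧ b ≤ a + 1 then 1 else 0) + (if b ≤ a then 1 else 0) +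
      ((if a ≤ b then 1 else 0) + 1) := by
  have h0 : blk a [b] ≠ [] := blk_ne_nil_of_ne (Or.inr (by simp))
  have h1 := one_notMem_blk a [b]
  rw [mL_eq h0 h1, mR_eq_s7 h0 h1, mB_eq h0 h1]
  simp only [Finset.sum_pair (show (2 : ℕ) ≠ 3 by norm_num)]
  simp [two_cons_blk, three_cons_blk, blk_append_two, blk_append_three₁,
    blk_append_three₂, admits_blk₁, admits_blk₂, admits_blk₃]

lemma ext_blk₂ (a k b : ℕ) :
    mL Lhex (blk a [k, b]) = (if b ≤ a ∧ a ≤ k + 1 ∧ k ≤ a + 1 then 1 else 0) +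
      (if a ≤ k ∧ b ≤ k + 1 then 1 else 0) ∧
    mR Lhex (blk a [k, b]) = (if a ≤ b ∧ k ≤ b + 1 ∧ b ≤ k + 1 then 1 else 0) +
      (if a ≤ k + 1 ∧ b ≤ k then 1 else 0) ∧
    mB Lhex (blk a [k, b]) = (if b = a ∧ a ≤ k + 1 ∧ k ≤ a + 1 then 1 else 0) +
      (if b + 1 ≤ a ∧ a ≤ k + 1 ∧ k ≤ a + 1 then 1 else 0) +
      ((if a + 1 ≤ b ∧ k ≤ b + 1 ∧ b ≤ k + 1 then 1 else 0) +
      (if a ≤ k ∧ b ≤ k then 1 else 0)) := by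
  have h0 : blk a [k, b] ≠ [] := blk_ne_nil_of_ne (Or.inr (by simp))
  have h1 := one_notMem_blk a [k, b]
  rw [mL_eq h0 h1, mR_eq_s7 h0 h1, mB_eq h0 h1]
  simp only [Finset.sum_pair (show (2 : ℕ) ≠ 3 by norm_num)]
  simp [two_cons_blk, three_cons_blk, blk_append_two,
    blk_append_three₂, admits_blk₂, admits_blk₃, admits_blk₄]

lemma Bispecial.admits_cons {v : List ℕ} (h : Bispecial Lhex v) (hv : v ≠ []) :
    Admits (2 :: v) ∧ Admits (3 :: v) := by
  classical
  obtain ⟨hL, h2, -⟩ := h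
  by_cases h1 : 1 ∈ v
  · -- A word containing `1` has `1` as its only left extension.
    exfalso
    have hsub : {a | a :: v ∈ Lhex} ⊆ {1} := by
      intro a ha
      rcases (mem_Lhex _).1 ha with h | h
      · rw [List.length_cons, List.replicate_succ] at h
        exact (List.cons.inj h).1
      · have := h.letters 1 (by simp [h1])
        omega
    have := Set.ncard_le_ncard hsub
    rw [Set.ncard_singleton] at this
    exact absurd (h2.trans this) (by norm_num)
  · rw [mL_eq hv h1] at h2
    by_contra hc
    rw [Finset.sum_pair (by norm_num)] at h2
    split_ifs at h2 <;> first | omega | tauto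

/-! ### Bispecial words of nonzero multiplicity -/

lemma bispecial_blk₀ {a : ℕ} (ha : a ≠ 0) :
    Bispecial Lhex (blk a []) ∧ mult Lhex (blk a []) = 1 := by
  obtain ⟨hl, hr, hb⟩ := ext_blk₀ ha
  refine ⟨⟨(mem_Lhex _).2 (Or.inr (admits_blk₀ a)), hl.ge, hr.ge⟩, ?_⟩
  simp [mult, hl, hr, hb]

lemma bispecial_blk₁ (a : ℕ) :
    Bispecial Lhex (blk a [a]) ∧ mult Lhex (blk a [a]) = 1 := by
  obtain ⟨hl, hr, hb⟩ := ext_blk₁ a a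
  simp only [Nat.le_succ, le_refl, and_self, if_true] at hl hr hb
  refine ⟨⟨(mem_Lhex _).2 (Or.inr (admits_blk₁ a a)), hl.ge, hr.ge⟩, ?_⟩
  simp [mult, hl, hr, hb]

lemma bispecial_blk₂ {a k : ℕ} (h : k = a ∨ k = a + 1) :
    Bispecial Lhex (blk a [k, a]) ∧ mult Lhex (blk a [k, a]) = -1 := by
  obtain ⟨hl, hr, hb⟩ := ext_blk₂ a k a
  have h1 : a ≤ k ∧ a ≤ k + 1 ∧ k ≤ a + 1 ∧ ¬ a + 1 ≤ a := by omega
  simp only [h1, le_refl, and_self, false_and, if_true, if_false] at hl hr hb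
  refine ⟨⟨(mem_Lhex _).2 (Or.inr ((admits_blk₂ a k a).2 (by omega))), hl.ge, hr.ge⟩, ?_⟩
  simp [mult, hl, hr, hb]

lemma exists_blk_of_mult_ne_zero {v : List ℕ} (h : Bispecial Lhex v) (hm : mult Lhex v ≠ 0) :
    (∃ a, a ≠ 0 ∧ v = blk a []) ∨ (∃ a, v = blk a [a]) ∨ (∃ a, v = blk a [a, a]) ∨
      ∃ a, v = blk a [a + 1, a] := by
  have hv : v ≠ [] := by
    rintro rfl
    exact hm mult_nil
  obtain ⟨h2, h3⟩ := h.admits_cons hv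
  obtain ⟨a, rfl⟩ | ⟨a, b, rfl⟩ | ⟨a, k, b, rfl⟩ := exists_blk_of_left_special h2 h3
  · refine Or.inl ⟨a, ?_, rfl⟩
    rintro rfl
    exact hv rfl
  · obtain ⟨hl, hr, hb⟩ := ext_blk₁ a b
    obtain ⟨-, hl2, hr2⟩ := h
    rw [mult, hl, hr, hb] at hm
    rw [hl] at hl2
    rw [hr] at hr2
    obtain rfl | hab := eq_or_ne a b
    · exact Or.inr (Or.inl ⟨a, rfl⟩)
    · exfalso
      split_ifs at hl2 hr2 hm <;> omega
  · obtain ⟨hl, hr, -⟩ := ext_blk₂ a k b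
    obtain ⟨-, hl2, hr2⟩ := h
    rw [hl] at hl2
    rw [hr] at hr2
    have : a = b ∧ (k = a ∨ k = a + 1) := by
      split_ifs at hl2 hr2 <;> omega
    obtain ⟨rfl, rfl | rfl⟩ := this
    · exact Or.inr (Or.inr (Or.inl ⟨_, rfl⟩))
    · exact Or.inr (Or.inr (Or.inr ⟨_, rfl⟩))

lemma length_blk₀ (a : ℕ) : (blk a []).length = a := by simp [blk]

lemma length_blk₁ (a b : ℕ) : (blk a [b]).length = a + b + 1 := by
  simp [blk]
  omega

lemma length_blk₂ (a k b : ℕ) : (blk a [k, b]).length = a + k + b + 2 := by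
  simp [blk]
  omega

lemma count_blk (a : ℕ) (l : List ℕ) : (blk a l).count 2 = l.length := by
  induction l generalizing a with
  | nil => simp [blk, List.count_replicate]
  | cons b l ih => simp [blk, List.count_replicate, ih]

lemma bfun_zero : bfun Lhex 0 = 0 := by
  refine finsum_mem_eq_zero_of_forall_eq_zero fun v hv => ?_
  rw [List.length_eq_zero_iff.1 hv.2, mult_nil]

lemma bfun_pos {n : ℕ} (hn : n ≠ 0) :
    bfun Lhex n = 1 + (if n % 2 = 1 then 1 else 0) - (if n % 3 = 2 then 1 else 0) -
      (if n % 3 = 0 then 1 else 0) := by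
  classical
  -- The only candidates of length `n`, before the lengths are checked.
  let T : Finset (List ℕ) := {blk n [], blk (n / 2) [n / 2], blk (n / 3) [n / 3, n / 3],
    blk (n / 3 - 1) [n / 3 - 1 + 1, n / 3 - 1]}
  have hT : bfun Lhex n = ∑ v ∈ T with v.length = n, mult Lhex v := by
    refine finsum_mem_eq_sum_of_inter_support_eq _ ?_
    ext v
    simp only [T, Set.mem_inter_iff, Set.mem_ofPred_eq, Function.mem_support, Finset.mem_coe,
      Finset.mem_filter, Finset.mem_insert, Finset.mem_singleton]
    refine and_congr_left fun hm => and_congr_left fun hlen => ⟨fun hb => ?_, ?_⟩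
    · obtain ⟨a, -, rfl⟩ | ⟨a, rfl⟩ | ⟨a, rfl⟩ | ⟨a, rfl⟩ := exists_blk_of_mult_ne_zero hb hm
      · rw [length_blk₀] at hlen
        exact Or.inl (by rw [hlen])
      · rw [length_blk₁] at hlen
        obtain rfl : a = n / 2 := by omega
        exact Or.inr (Or.inl rfl)
      · rw [length_blk₂] at hlen
        obtain rfl : a = n / 3 := by omega
        exact Or.inr (Or.inr (Or.inl rfl))
      · rw [length_blk₂] at hlen
        obtain rfl : a = n / 3 - 1 := by omega
        exact Or.inr (Or.inr (Or.inr rfl))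
    · rintro (rfl | rfl | rfl | rfl)
      · exact (bispecial_blk₀ hn).1
      · exact (bispecial_blk₁ _).1
      · exact (bispecial_blk₂ (Or.inl rfl)).1
      · exact (bispecial_blk₂ (Or.inr rfl)).1
  have ne_of_count : ∀ {a b : ℕ} {l m : List ℕ}, l.length ≠ m.length → blk a l ≠ blk b m := by
    intro a b l m h he
    exact h (by rw [← count_blk a l, he, count_blk])
  have ne_of_mod : ∀ a b : ℕ, blk a [a, a] ≠ blk b [b + 1, b] := by
    intro a b he
    have := congrArg List.length he
    rw [length_blk₂, length_blk₂] at this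
    omega
  rw [hT, Finset.sum_filter, Finset.sum_insert (by simp [ne_of_count]),
    Finset.sum_insert (by simp [ne_of_count]), Finset.sum_pair (ne_of_mod _ _),
    (bispecial_blk₀ hn).2, (bispecial_blk₁ _).2, (bispecial_blk₂ (Or.inl rfl)).2,
    (bispecial_blk₂ (Or.inr rfl)).2]
  simp only [length_blk₀, length_blk₁, length_blk₂]
  split_ifs <;> omega

/-- For `L_hex`, `Σ_{i=n}^{n+11} b(i) = 10` for every `n`; more precisely `b(n)` depends only
on `n mod 6` and takes the values `0, 2, 0, 1, 1, 1` for `n ≡ 0, 1, 2, 3, 4, 5 (mod 6)`. -/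
theorem bfun_Lhex :
    (∀ n : ℕ, ∑ i ∈ Finset.range 12, bfun Lhex (n + i) = 10) ∧
    (∀ n : ℕ, bfun Lhex n =
      if n % 6 = 0 then 0 else if n % 6 = 1 then 2 else if n % 6 = 2 then 0 else 1) := by
  have h : ∀ n : ℕ, bfun Lhex n =
      if n % 6 = 0 then 0 else if n % 6 = 1 then 2 else if n % 6 = 2 then 0 else 1 := by
    intro n
    obtain rfl | hn := eq_or_ne n 0
    · simpa using bfun_zero
    · rw [bfun_pos hn]
      split_ifs <;> omega
  refine ⟨fun n => ?_, h⟩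
  have hmod : ∀ i, (n + i) % 6 = (n % 6 + i) % 6 := by
    intro i
    omega
  simp only [h, hmod]
  have hr : n % 6 < 6 := Nat.mod_lt _ (by norm_num)
  generalize n % 6 = r at hr
  interval_cases r <;> rfl
end
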